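/- For every projection game G, the value and collision value satisfy val(G) ≤ ‖G‖ and ‖G‖² ≤ val(G) (equivalently, val(G) ≤ ‖G‖ ≤ val(G)^{1/2}). -/

import Mathlib

open Finset

/-- A projection game: finite nonempty question sets `Q1` (Alice) and `Q2` (Bob),
a finite nonempty alphabet `A`, and a probability mass function `μ` on triples
`(u, v, π)` where `π : A → Option A` encodes a projection constraint
(the answer pair `(α, β)` satisfies `π` iff `π β = some α`). -/
structure ProjGame where
  Q1 : Type
  Q2 : Type
  A : Type
  [fQ1 : Fintype Q1]
  [fQ2 : Fintype Q2]
  [fA : Fintype A]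
  [neQ1 : Nonempty Q1]
  [neQ2 : Nonempty Q2]
  [neA : Nonempty A]
  [dQ1 : DecidableEq Q1]
  [dQ2 : DecidableEq Q2]
  [dA : DecidableEq A]
  μ : Q1 × Q2 × (A → Option A) → ℝ
  μ_nonneg : ∀ x, 0 ≤ μ x
  μ_sum : ∑ x, μ x = 1

attribute [instance] ProjGame.fQ1 ProjGame.fQ2 ProjGame.fA
  ProjGame.neQ1 ProjGame.neQ2 ProjGame.neA ProjGame.dQ1 ProjGame.dQ2 ProjGame.dA

namespace ProjGame

variable (G : ProjGame)

/-- The `U`-marginal (Alice-side marginal) of `μ`. -/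
noncomputable def wU (u : G.Q1) : ℝ := ∑ v, ∑ π, G.μ (u, v, π)

/-- The `V`-marginal (Bob-side marginal) of `μ`. -/
noncomputable def wV (v : G.Q2) : ℝ := ∑ u, ∑ π, G.μ (u, v, π)

/-- The game operator: `(Gf)(u,α) = E_{(v,π)|u} [∑_{β : π β = some α} f (v,β)]`. -/
noncomputable def op (f : G.Q2 × G.A → ℝ) : G.Q1 × G.A → ℝ :=
  fun p =>
    (∑ v, ∑ π, G.μ (p.1, v, π) * ∑ β, if π β = some p.2 then f (v, β) else 0) / G.wU p.1

/-- Squared norm on functions on `U × Σ`: `‖g‖² = E_u [∑_α g(u,α)²]`. -/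
noncomputable def normUsq (g : G.Q1 × G.A → ℝ) : ℝ := ∑ u, G.wU u * ∑ α, (g (u, α)) ^ 2

/-- Squared norm on functions on `V × Σ`: `‖f‖² = E_v [∑_β f(v,β)²]`. -/
noncomputable def normVsq (f : G.Q2 × G.A → ℝ) : ℝ := ∑ v, G.wV v * ∑ β, (f (v, β)) ^ 2

/-- Inner product `⟨g, g'⟩ = E_u [∑_α g(u,α) g'(u,α)]`. -/
noncomputable def inn (g g' : G.Q1 × G.A → ℝ) : ℝ :=
  ∑ u, G.wU u * ∑ α, g (u, α) * g' (u, α)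

/-- An assignment for Bob. -/
def IsBob (f : G.Q2 × G.A → ℝ) : Prop := (∀ p, 0 ≤ f p) ∧ ∀ v, ∑ β, f (v, β) = 1

/-- An assignment for Alice. -/
def IsAlice (g : G.Q1 × G.A → ℝ) : Prop := (∀ p, 0 ≤ g p) ∧ ∀ u, ∑ α, g (u, α) = 1

/-- The value of the game: `val(G) = max ⟨g, Gf⟩` over assignments. -/
noncomputable def val : ℝ :=
  sSup { x | ∃ f g, G.IsBob f ∧ G.IsAlice g ∧ x = G.inn g (G.op f) }

/-- The collision value `‖G‖ = max_f ‖Gf‖` over assignments `f` for Bob. -/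
noncomputable def collVal : ℝ :=
  sSup { x | ∃ f, G.IsBob f ∧ x = Real.sqrt (G.normUsq (G.op f)) }

/-- Product of projection constraints. -/
def tensorC {A A' : Type} (π : A → Option A) (π' : A' → Option A') :
    A × A' → Option (A × A') :=
  fun b => (π b.1).bind fun a => (π' b.2).map fun a' => (a, a')

/-- The product (parallel repetition) of two projection games. -/
noncomputable def tensor (G H : ProjGame) : ProjGame where
  Q1 := G.Q1 × H.Q1
  Q2 := G.Q2 × H.Q2
  A := G.A × H.A
  μ := fun x =>
    ∑ y : (G.Q1 × G.Q2 × (G.A → Option G.A)) × (H.Q1 × H.Q2 × (H.A → Option H.A)),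
      if ((y.1.1, y.2.1), (y.1.2.1, y.2.2.1), tensorC y.1.2.2 y.2.2.2) = x
      then G.μ y.1 * H.μ y.2 else 0
  μ_nonneg := by
    intro x
    refine Finset.sum_nonneg fun y _ => ?_
    split
    · exact mul_nonneg (G.μ_nonneg _) (H.μ_nonneg _)
    · exact le_refl 0
  μ_sum := by
    rw [Finset.sum_comm]
    simp only [Finset.sum_ite_eq, Finset.mem_univ, if_true]
    rw [Fintype.sum_prod_type]
    calc (∑ y1, ∑ y2, G.μ y1 * H.μ y2)
        = (∑ y1, G.μ y1) * (∑ y2, H.μ y2) := by rw [Finset.sum_mul_sum]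
      _ = 1 := by rw [G.μ_sum, H.μ_sum, mul_one]

/-- `G.iterTensor k` is the `(k+1)`-fold parallel repetition `G^{⊗(k+1)}`. -/
noncomputable def iterTensor (G : ProjGame) : ℕ → ProjGame
  | 0 => G
  | n + 1 => G.tensor (G.iterTensor n)

/-- `val₊(G)`: supremum of values of vector assignments. -/
noncomputable def valPlus (G : ProjGame) : ℝ :=
  sSup { x | ∃ n : ℕ, 0 < n ∧ ∃ f : G.Q2 × G.A → Fin n → ℝ,
    (∀ p i, 0 ≤ f p i) ∧
    (∀ v, Real.sqrt (∑ i, (∑ β, f (v, β) i) ^ 2) ≤ 1) ∧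
    x = Real.sqrt (∑ u, G.wU u * ∑ α, ∑ i, (G.op (fun q => f q i) (u, α)) ^ 2) }

/-- `‖Th‖² = E_v [(∑_β h(v,β))²]`. -/
noncomputable def Tnormsq (G : ProjGame) (h : G.Q2 × G.A → ℝ) : ℝ :=
  ∑ v, G.wV v * (∑ β, h (v, β)) ^ 2

/-- `λ₊(G)`: supremum of `‖Gh‖/‖Th‖` over nonnegative `h` with `‖Th‖ > 0`. -/
noncomputable def lambdaPlus (G : ProjGame) : ℝ :=
  sSup { x | ∃ h : G.Q2 × G.A → ℝ, (∀ p, 0 ≤ h p) ∧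
    0 < Real.sqrt (G.Tnormsq h) ∧
    x = Real.sqrt (G.normUsq (G.op h)) / Real.sqrt (G.Tnormsq h) }

/-- The symmetrized distribution on `V × V` (with the constraints marginalized out). -/
noncomputable def msym (G : ProjGame) (v v' : G.Q2) : ℝ :=
  ∑ u, ((∑ π, G.μ (u, v, π)) * (∑ π', G.μ (u, v', π'))) / G.wU u

/-- `G` is `γ`-expanding: the Markov operator of the symmetrized constraint graph has
spectral gap at least `γ`, i.e. `|⟨x, Ax⟩| ≤ (1-γ) E_v[x(v)²]` for mean-zero `x`. -/
def IsExpanding (G : ProjGame) (γ : ℝ) : Prop :=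
  ∀ x : G.Q2 → ℝ, (∑ v, G.wV v * x v) = 0 →
    |∑ v, ∑ v', G.msym v v' * x v * x v'| ≤ (1 - γ) * ∑ v, G.wV v * (x v) ^ 2

/-- The symmetrized distribution on `(v, v', π, π')`. -/
noncomputable def msymFull (G : ProjGame) (v v' : G.Q2) (π π' : G.A → Option G.A) : ℝ :=
  ∑ u, (G.μ (u, v, π) * G.μ (u, v', π')) / G.wU u

/-- The value of the assignment `x` in the symmetrized game `G_sym`. -/
noncomputable def symValAssign (G : ProjGame) (x : G.Q2 → G.A) : ℝ :=
  ∑ v, ∑ v', ∑ π, ∑ π', G.msymFull v v' π π' *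
    (if ∃ α, π (x v) = some α ∧ π' (x v') = some α then 1 else 0)

/-- The value of the symmetrized game `G_sym`. -/
noncomputable def symVal (G : ProjGame) : ℝ :=
  sSup { r | ∃ x : G.Q2 → G.A, r = G.symValAssign x }

end ProjGame

/-!
For an assignment `f` of Bob, `Gf` is nonnegative with row sums at most `1`. Hence some assignment
`g` of Alice dominates `Gf`, and `‖Gf‖² ≤ ⟨g, Gf⟩ ≤ val(G)`. Conversely, every assignment `g` of
Alice satisfies `‖g‖ ≤ 1`, so `⟨g, Gf⟩ ≤ ‖Gf‖ ≤ ‖G‖` by Cauchy–Schwarz.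
-/

namespace ProjGame

section Subassignment

variable {X A : Type*} [Fintype A]

/-- A subassignment: a strategy, for the questions in `X`, that may give no answer with some
probability. The game operator preserves subassignments, but maps assignments only to
subassignments: a constraint may reject some answers of Bob outright, and the division by `wU u` in
`op` makes `Gf` vanish at the questions `u` of probability `0`. -/
structure IsSubassignment (h : X × A → ℝ) : Prop where
  nonneg : ∀ p, 0 ≤ h p
  sum_le_one : ∀ x, ∑ a, h (x, a) ≤ 1

lemma IsSubassignment.sum_sq_le_one {h : X × A → ℝ} (hh : IsSubassignment h) (x : X) :
    ∑ a, h (x, a) ^ 2 ≤ 1 :=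
  (sum_sq_le_sq_sum_of_nonneg fun _ _ => hh.nonneg _).trans
    (pow_le_one₀ (sum_nonneg fun _ _ => hh.nonneg _) (hh.sum_le_one x))

end Subassignment

lemma sum_sum_ite_eq_some_le {A B M : Type*} [Fintype A] [Fintype B] [DecidableEq A]
    [AddCommMonoid M] [PartialOrder M] [IsOrderedAddMonoid M]
    (π : B → Option A) {φ : B → M} (hφ : ∀ b, 0 ≤ φ b) :
    ∑ a, ∑ b, (if π b = some a then φ b else 0) ≤ ∑ b, φ b := by
  rw [sum_comm]
  refine sum_le_sum fun b _ => ?_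
  cases π b with
  | none => simpa using hφ b
  | some a => simp

variable {G : ProjGame} {f : G.Q2 × G.A → ℝ} {g h : G.Q1 × G.A → ℝ}

lemma IsBob.isSubassignment (hf : G.IsBob f) : IsSubassignment f :=
  ⟨hf.1, fun v => (hf.2 v).le⟩

lemma IsAlice.isSubassignment (hg : G.IsAlice g) : IsSubassignment g :=
  ⟨hg.1, fun u => (hg.2 u).le⟩

lemma wU_nonneg (u : G.Q1) : 0 ≤ G.wU u :=
  sum_nonneg fun _ _ => sum_nonneg fun _ _ => G.μ_nonneg _

variable (G) in
lemma sum_wU : ∑ u, G.wU u = 1 := by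
  rw [← G.μ_sum]
  simp only [wU, Fintype.sum_prod_type]

lemma op_nonneg (hf : ∀ p, 0 ≤ f p) (p : G.Q1 × G.A) : 0 ≤ G.op f p :=
  div_nonneg
    (sum_nonneg fun _ _ => sum_nonneg fun _ _ => mul_nonneg (G.μ_nonneg _) <|
      sum_nonneg fun _ _ => ite_nonneg (hf _) le_rfl)
    (wU_nonneg _)

lemma IsSubassignment.sum_op_le_one (hf : IsSubassignment f) (u : G.Q1) :
    ∑ α, G.op f (u, α) ≤ 1 := by
  have accepted_le_one (v : G.Q2) (π : G.A → Option G.A) :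
      ∑ α, ∑ β, (if π β = some α then f (v, β) else 0) ≤ 1 :=
    (sum_sum_ite_eq_some_le π fun β => hf.nonneg (v, β)).trans (hf.sum_le_one v)
  simp only [op, ← sum_div]
  refine div_le_one_of_le₀ ?_ (wU_nonneg u)
  calc ∑ α, ∑ v, ∑ π, G.μ (u, v, π) * ∑ β, (if π β = some α then f (v, β) else 0)
      = ∑ v, ∑ π, G.μ (u, v, π) * ∑ α, ∑ β, (if π β = some α then f (v, β) else 0) := by
        rw [sum_comm]
        refine sum_congr rfl fun v _ => ?_
        rw [sum_comm]
        simp only [mul_sum]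
    _ ≤ ∑ v, ∑ π, G.μ (u, v, π) :=
        sum_le_sum fun v _ => sum_le_sum fun π _ =>
          mul_le_of_le_one_right (G.μ_nonneg _) (accepted_le_one v π)
    _ = G.wU u := rfl

lemma IsSubassignment.op (hf : IsSubassignment f) : IsSubassignment (G.op f) :=
  ⟨op_nonneg hf.nonneg, hf.sum_op_le_one⟩

lemma IsSubassignment.exists_isAlice_ge (hh : IsSubassignment h) : ∃ g, G.IsAlice g ∧ h ≤ g := by
  -- Spread the missing probability uniformly over the alphabet.
  let deficit (u : G.Q1) : ℝ := (1 - ∑ α, h (u, α)) / Fintype.card G.A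
  have deficit_nonneg (u : G.Q1) : 0 ≤ deficit u :=
    div_nonneg (sub_nonneg.2 (hh.sum_le_one u)) (Nat.cast_nonneg _)
  refine ⟨fun p => h p + deficit p.1,
    ⟨fun p => add_nonneg (hh.nonneg p) (deficit_nonneg p.1), fun u => ?_⟩,
    fun p => le_add_of_nonneg_right (deficit_nonneg p.1)⟩
  calc ∑ α, (h (u, α) + deficit u)
      = ∑ α, h (u, α) + Fintype.card G.A * deficit u := by
        rw [sum_add_distrib, sum_const, card_univ, nsmul_eq_mul]
    _ = 1 := by
        rw [mul_div_cancel₀ _ (Nat.cast_ne_zero.2 Fintype.card_ne_zero), add_sub_cancel]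

lemma normUsq_nonneg (h : G.Q1 × G.A → ℝ) : 0 ≤ G.normUsq h :=
  sum_nonneg fun u _ => mul_nonneg (wU_nonneg u) (sum_nonneg fun _ _ => sq_nonneg _)

lemma inn_nonneg (hg : ∀ p, 0 ≤ g p) (hh : ∀ p, 0 ≤ h p) : 0 ≤ G.inn g h :=
  sum_nonneg fun u _ => mul_nonneg (wU_nonneg u) <|
    sum_nonneg fun _ _ => mul_nonneg (hg _) (hh _)

lemma normUsq_le_inn (hh : ∀ p, 0 ≤ h p) (hhg : h ≤ g) : G.normUsq h ≤ G.inn g h := by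
  refine sum_le_sum fun u _ => mul_le_mul_of_nonneg_left (sum_le_sum fun α _ => ?_) (wU_nonneg u)
  rw [sq]
  exact mul_le_mul_of_nonneg_right (hhg _) (hh _)

lemma IsSubassignment.normUsq_le_one (hh : IsSubassignment h) : G.normUsq h ≤ 1 :=
  calc G.normUsq h ≤ ∑ u, G.wU u :=
        sum_le_sum fun u _ => mul_le_of_le_one_right (wU_nonneg u) (hh.sum_sq_le_one u)
    _ = 1 := G.sum_wU

lemma sq_inn_le_normUsq_mul_normUsq (g h : G.Q1 × G.A → ℝ) :
    G.inn g h ^ 2 ≤ G.normUsq g * G.normUsq h := by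
  have inn_eq : G.inn g h = ∑ p, G.wU p.1 * (g p * h p) := by
    simp only [inn, mul_sum, Fintype.sum_prod_type]
  have normUsq_eq (k : G.Q1 × G.A → ℝ) : G.normUsq k = ∑ p, G.wU p.1 * k p ^ 2 := by
    simp only [normUsq, mul_sum, Fintype.sum_prod_type]
  have weight_mul_sq_nonneg (k : G.Q1 × G.A → ℝ) (p : G.Q1 × G.A) : 0 ≤ G.wU p.1 * k p ^ 2 :=
    mul_nonneg (wU_nonneg p.1) (sq_nonneg _)
  rw [inn_eq, normUsq_eq, normUsq_eq]
  refine sum_sq_le_sum_mul_sum_of_sq_le_mul _ (fun p _ => weight_mul_sq_nonneg g p)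
    (fun p _ => weight_mul_sq_nonneg h p) fun p _ => le_of_eq ?_
  ring

lemma IsSubassignment.inn_le_sqrt_normUsq (hg : IsSubassignment g) (h : G.Q1 × G.A → ℝ) :
    G.inn g h ≤ √(G.normUsq h) :=
  Real.le_sqrt_of_sq_le <| (sq_inn_le_normUsq_mul_normUsq g h).trans <|
    mul_le_of_le_one_left (normUsq_nonneg h) hg.normUsq_le_one

lemma IsBob.sqrt_normUsq_op_le_one (hf : G.IsBob f) : √(G.normUsq (G.op f)) ≤ 1 :=
  Real.sqrt_le_one.2 hf.isSubassignment.op.normUsq_le_one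

lemma IsBob.sqrt_normUsq_op_le_collVal (hf : G.IsBob f) : √(G.normUsq (G.op f)) ≤ G.collVal :=
  le_csSup ⟨1, by rintro _ ⟨f, hf, rfl⟩; exact hf.sqrt_normUsq_op_le_one⟩ ⟨f, hf, rfl⟩

lemma IsBob.inn_op_le_val (hf : G.IsBob f) (hg : G.IsAlice g) : G.inn g (G.op f) ≤ G.val := by
  refine le_csSup ⟨1, ?_⟩ ⟨f, g, hf, hg, rfl⟩
  rintro _ ⟨f, g, hf, hg, rfl⟩
  exact (hg.isSubassignment.inn_le_sqrt_normUsq _).trans hf.sqrt_normUsq_op_le_one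

lemma IsBob.normUsq_op_le_val (hf : G.IsBob f) : G.normUsq (G.op f) ≤ G.val := by
  obtain ⟨g, hg, hle⟩ := hf.isSubassignment.op.exists_isAlice_ge
  exact (normUsq_le_inn (op_nonneg hf.1) hle).trans (hf.inn_op_le_val hg)

variable (G)

lemma val_nonneg : 0 ≤ G.val := by
  refine Real.sSup_nonneg ?_
  rintro _ ⟨f, g, hf, hg, rfl⟩
  exact inn_nonneg hg.1 (op_nonneg hf.1)

lemma collVal_nonneg : 0 ≤ G.collVal := by
  refine Real.sSup_nonneg ?_
  rintro _ ⟨f, -, rfl⟩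
  exact Real.sqrt_nonneg _

lemma val_le_collVal : G.val ≤ G.collVal := by
  refine Real.sSup_le ?_ G.collVal_nonneg
  rintro _ ⟨f, g, hf, hg, rfl⟩
  exact (hg.isSubassignment.inn_le_sqrt_normUsq _).trans hf.sqrt_normUsq_op_le_collVal

lemma collVal_le_sqrt_val : G.collVal ≤ √G.val := by
  refine Real.sSup_le ?_ (Real.sqrt_nonneg _)
  rintro _ ⟨f, hf, rfl⟩
  exact Real.sqrt_le_sqrt hf.normUsq_op_le_val

end ProjGame

/-- The value and collision value satisfy `val(G) ≤ ‖G‖` and `‖G‖² ≤ val(G)`. -/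
theorem val_le_collVal_le_sqrt_val (G : ProjGame) :
    G.val ≤ G.collVal ∧ G.collVal ^ 2 ≤ G.val :=
  ⟨G.val_le_collVal, (Real.le_sqrt G.collVal_nonneg G.val_nonneg).1 G.collVal_le_sqrt_val⟩
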